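/- arXiv:1910.02401 — 3 statements merged into one kernel-verified Lean document; each statement's English description precedes it below -/
import Mathlib

section
/- Let X be a right-proper two-term object with parameter u ∈ {0,1} and let l ∈ V^{u+1}. Then every right socle morphism from P_l to X[ω] is zero, where P_l is regarded as the two-term object with multiplicities x_l = 1, x_k = 0 for k ≠ l, α_{P_l} = id_{P_l} and φ_{P_l} = 0. -/
/-!
Suppose `f : P_l → X[ω]` is a nonzero right socle morphism, written `f = α_X[ω] ∘ f'`. By the
perfect pairing on `P_l` there is `g : X → P_l` with `g[ω] ∘ f ≠ 0`. Put `g₀ = g ∘ α_X`, a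
morphism `⊕ P_k^{y_k} → P_l`. As `g₀ ∘ φ_X = 0`, right-properness shows that `g₀` is not a split
epimorphism. Its components `P_k → P_l` vanish for `k ≠ l` (equal colours, hence not adjacent),
and for `k = l` they are non-split endomorphisms of `P_l`. Now `g[ω] ∘ f = g₀[ω] ∘ f'` is shown
to vanish summand by summand.

* If `ω ≠ 0`, a non-split endomorphism of `P_l` is zero (`endo_eq_zero_of_ne`), so `g₀ = 0`.
* If `ω = 0`, the non-split endomorphisms of the local ring `End P_l = k[t]/(t²)` are the
  multiples of `t`, so two of them compose to zero (`endo_comp_eq_zero`). The socle condition implies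
  that the components `P_l → P_l` of `f'` are non-split as well.
-/

/-!
STATEMENT 11: if X is right-proper and l ∈ V^{u+1}, then every right socle morphism
from P_l (viewed as the trivial two-term object) to X[ω] is zero.
-/

open CategoryTheory CategoryTheory.Limits CategoryTheory.Pretriangulated

namespace Statement11

universe v u

def typeA (n : ℕ) : SimpleGraph (Fin n) :=
  SimpleGraph.fromRel (fun i j => (i : ℕ) + 1 = (j : ℕ))

def typeD (n : ℕ) : SimpleGraph (Fin n) :=
  SimpleGraph.fromRel
    (fun i j => (1 ≤ (i : ℕ) ∧ (i : ℕ) + 1 = (j : ℕ)) ∨ ((i : ℕ) = 0 ∧ (j : ℕ) = 2))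

def typeE (n : ℕ) : SimpleGraph (Fin n) :=
  SimpleGraph.fromRel
    (fun i j => (1 ≤ (i : ℕ) ∧ (i : ℕ) + 1 = (j : ℕ)) ∨ ((i : ℕ) = 0 ∧ (j : ℕ) = 3))

def IsADE {V : Type*} (G : SimpleGraph V) : Prop :=
  (∃ n : ℕ, 1 ≤ n ∧ Nonempty (G ≃g typeA n)) ∨
  (∃ n : ℕ, 4 ≤ n ∧ Nonempty (G ≃g typeD n)) ∨
  (∃ n : ℕ, (n = 6 ∨ n = 7 ∨ n = 8) ∧ Nonempty (G ≃g typeE n))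

/-- The canonical generator of the "span of the identity" inside `Hom^ω(P, P)`:
for `ω = 0` it is the identity of `P` (transported to `P ⟶ P⟦0⟧`), and for `ω ≠ 0`
it is zero (the identity has degree `0 ≠ ω`). -/
noncomputable def unitClass (D : Type u) [Category.{v} D] [Preadditive D] [HasShift D ℤ]
    (ω : ℤ) (P : D) : P ⟶ P⟦ω⟧ :=
  if h : ω = 0 then (shiftFunctorZero D ℤ).inv.app P ≫ eqToHom (by rw [h]) else 0

/-- A `Γ`-configuration `{P i}` of `ω`-spherical objects in a `k`-linear triangulated
category `D`, normalized with respect to a 2-colouring `col` of `Γ₀` and a decomposition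
`ω = ω₀ + ω₁` so that `Hom^*(P i, P j)` is concentrated in degree `ω_u` when
`col i = u` and `j` is a neighbour of `i`. -/
structure Config (k : Type) [Field k] (V : Type) [Fintype V] [DecidableEq V]
    (G : SimpleGraph V)
    (D : Type u) [Category.{v} D] [Preadditive D] [CategoryTheory.Linear k D]
    [HasZeroObject D] [HasShift D ℤ] [∀ n : ℤ, (shiftFunctor D n).Additive]
    [Pretriangulated D] [HasFiniteBiproducts D]
    (ω ω₀ ω₁ : ℤ) (col : V → ZMod 2) : Type (max u v) where
  P : V → D
  /-- spherical condition (i): `Hom^*(X, P i)` is finite dimensional for every `X` -/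
  finiteness : ∀ (i : V) (X : D),
    FiniteDimensional k (DirectSum ℤ (fun n : ℤ => X ⟶ (P i)⟦n⟧))
  id_ne : ∀ i : V, 𝟙 (P i) ≠ 0
  /-- spherical condition (ii): `Hom^n(P i, P i) = 0` unless `n ∈ {0, ω}` -/
  vanish : ∀ (i : V) (n : ℤ), n ≠ 0 → n ≠ ω → ∀ f : P i ⟶ (P i)⟦n⟧, f = 0
  /-- spherical condition (ii) for `ω = 0`: `End P i ≅ k[t]/(t²)` -/
  endo_zero : ω = 0 → ∀ i : V, ∃ t : P i ⟶ P i, t ≫ t = 0 ∧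
      (∀ f : P i ⟶ P i, ∃ a b : k, f = a • 𝟙 (P i) + b • t) ∧
      (∀ a b : k, a • 𝟙 (P i) + b • t = 0 → a = 0 ∧ b = 0)
  /-- spherical condition (ii) for `ω ≠ 0`: `Hom^0 = k·id` and `Hom^ω` is a line -/
  endo_ne : ω ≠ 0 → ∀ i : V, (∀ f : P i ⟶ P i, ∃ a : k, f = a • 𝟙 (P i)) ∧
      (∃ t : P i ⟶ (P i)⟦ω⟧, t ≠ 0 ∧ ∀ f : P i ⟶ (P i)⟦ω⟧, ∃ a : k, f = a • t)
  /-- spherical condition (iii): nondegeneracy of the composition pairing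
  `Hom^*(P i, X) × Hom^*(X, P i) → Hom^*(P i, P i)/⟨Id⟩ ≅ k` in the first variable -/
  pairing_left : ∀ (i : V) (X : D) (n : ℤ) (f : P i ⟶ X⟦n⟧), f ≠ 0 →
      ∃ g : X ⟶ (P i)⟦ω - n⟧, ¬ ∃ a : k,
        f ≫ (shiftFunctor D n).map g ≫
            (shiftFunctorAdd' D (ω - n) n ω (by ring)).inv.app (P i)
          = a • unitClass D ω (P i)
  /-- spherical condition (iii): nondegeneracy in the second variable -/
  pairing_right : ∀ (i : V) (X : D) (m : ℤ) (g : X ⟶ (P i)⟦m⟧), g ≠ 0 →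
      ∃ f : P i ⟶ X⟦ω - m⟧, ¬ ∃ a : k,
        f ≫ (shiftFunctor D (ω - m)).map g ≫
            (shiftFunctorAdd' D m (ω - m) ω (by ring)).inv.app (P i)
          = a • unitClass D ω (P i)
  /-- the 2-colouring is proper: adjacent vertices have different colours -/
  bipartite : ∀ i j : V, G.Adj i j → col j = col i + 1
  homega : ω₀ + ω₁ = ω
  /-- normalization: for `i ∈ V^u` and `j ∈ N(i)`, `Hom^*(P i, P j)` is concentrated
  in degree `ω_u` -/
  adj_conc : ∀ i j : V, G.Adj i j → ∀ n : ℤ,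
      n ≠ (if col i = 0 then ω₀ else ω₁) → ∀ f : P i ⟶ (P j)⟦n⟧, f = 0
  /-- `Hom^*(P i, P j)` is one-dimensional for adjacent `i`, `j` -/
  adj_one : ∀ i j : V, G.Adj i j →
      ∃ γ : P i ⟶ (P j)⟦if col i = 0 then ω₀ else ω₁⟧, γ ≠ 0 ∧
        ∀ f : P i ⟶ (P j)⟦if col i = 0 then ω₀ else ω₁⟧, ∃ a : k, f = a • γ
  /-- `Hom^*(P i, P j) = 0` for distinct non-adjacent `i`, `j` -/
  nonadj : ∀ i j : V, i ≠ j → ¬ G.Adj i j → ∀ (n : ℤ) (f : P i ⟶ (P j)⟦n⟧), f = 0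

variable {k : Type} [Field k] {V : Type} [Fintype V] [DecidableEq V]
  {G : SimpleGraph V} [DecidableRel G.Adj]
  {D : Type u} [Category.{v} D] [Preadditive D] [CategoryTheory.Linear k D]
  [HasZeroObject D] [HasShift D ℤ] [∀ n : ℤ, (shiftFunctor D n).Additive]
  [Pretriangulated D] [HasFiniteBiproducts D]
  {ω ω₀ ω₁ : ℤ} {col : V → ZMod 2}

/-- `ω_u` for `u ∈ ℤ/2`. -/
def ωsel (ω₀ ω₁ : ℤ) (u : ZMod 2) : ℤ := if u = 0 then ω₀ else ω₁

/-- The object `⊕_{j} P_j^{x_j}` attached to a multiplicity function `x : V → ℕ`. -/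
noncomputable def objOf (C : Config k V G D ω ω₀ ω₁ col) (x : V → ℕ) : D :=
  biproduct (fun p : (Σ j : V, Fin (x j)) => C.P p.1)

/-- A two-term object: an object `X` fitting into a distinguished triangle
`X[−1] --β--> ⊕_{j∈V^u} P_j^{x_j}[−ω_u] --φ--> ⊕_{l∈V^{u+1}} P_l^{y_l} --α--> X`. -/
structure TwoTerm (C : Config k V G D ω ω₀ ω₁ col) : Type (max u v) where
  u : ZMod 2
  x : V → ℕ
  y : V → ℕ
  hx : ∀ j : V, x j ≠ 0 → col j = u
  hy : ∀ j : V, y j ≠ 0 → col j = u + 1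
  X : D
  φ : (objOf C x)⟦-(ωsel ω₀ ω₁ u)⟧ ⟶ objOf C y
  α : objOf C y ⟶ X
  β : X⟦(-1 : ℤ)⟧ ⟶ (objOf C x)⟦-(ωsel ω₀ ω₁ u)⟧
  tri : Triangle.mk φ α ((shiftEquiv D (1 : ℤ)).counitIso.inv.app X ≫
          (shiftFunctor D (1 : ℤ)).map β) ∈ distTriang D

/-- `X` is right-proper: `f ∘ φ_X ≠ 0` for every split epimorphism
`f : ⊕ P_l^{y_l} → P_l`. -/
def RightProper {C : Config k V G D ω ω₀ ω₁ col} (T : TwoTerm C) : Prop :=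
  ∀ l : V, col l = T.u + 1 → ∀ f : objOf C T.y ⟶ C.P l, IsSplitEpi f → T.φ ≫ f ≠ 0

/-- `X` is left-proper: `φ_X ∘ g[−ω_u] ≠ 0` for every split monomorphism
`g : P_l → ⊕ P_j^{x_j}`. -/
def LeftProper {C : Config k V G D ω ω₀ ω₁ col} (T : TwoTerm C) : Prop :=
  ∀ l : V, col l = T.u → ∀ g : C.P l ⟶ objOf C T.x, IsSplitMono g →
    (shiftFunctor D (-(ωsel ω₀ ω₁ T.u))).map g ≫ T.φ ≠ 0

/-- `f : X ⟶ Y[ω]` is a right socle morphism. -/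
def IsRightSocle {C : Config k V G D ω ω₀ ω₁ col} (X Y : TwoTerm C)
    (f : X.X ⟶ (Y.X)⟦ω⟧) : Prop :=
  ∃ f' : X.X ⟶ (objOf C Y.y)⟦ω⟧,
    f = f' ≫ (shiftFunctor D ω).map Y.α ∧
    ∀ l : V, col l = Y.u + 1 → ∀ g : objOf C Y.y ⟶ C.P l, IsSplitEpi g →
      ¬ IsSplitEpi (X.α ≫ f' ≫ (shiftFunctor D ω).map g)


set_option linter.unusedSectionVars false

theorem isSplitEpi_of_smul_add (P : D) (t : P ⟶ P) (ht : t ≫ t = 0) (a b : k) (ha : a ≠ 0) :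
    IsSplitEpi (a • 𝟙 P + b • t) := by
  -- the inverse of `a + b t` in `k[t]/(t²)` is `a⁻¹ - a⁻² b t`
  refine IsSplitEpi.mk' ⟨a⁻¹ • 𝟙 P - (a⁻¹ * a⁻¹ * b) • t, ?_⟩
  simp only [Preadditive.comp_add, Preadditive.sub_comp, Linear.smul_comp, Linear.comp_smul,
    Category.id_comp, Category.comp_id, ht, smul_zero, sub_zero, smul_sub, smul_smul]
  have h1 : a * a⁻¹ = 1 := mul_inv_cancel₀ ha
  have h2 : a * (a⁻¹ * a⁻¹ * b) = b * a⁻¹ := by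
    rw [← mul_assoc, ← mul_assoc, h1, one_mul, mul_comm]
  rw [h1, h2, one_smul]
  abel

theorem endo_eq_zero_of_ne (C : Config k V G D ω ω₀ ω₁ col) (hω : ω ≠ 0) (l : V)
    (h : C.P l ⟶ C.P l) (hh : ¬ IsSplitEpi h) : h = 0 := by
  obtain ⟨a, rfl⟩ := (C.endo_ne hω l).1 h
  by_cases ha : a = 0
  · simp [ha]
  · refine absurd ?_ hh
    simpa using isSplitEpi_of_smul_add (C.P l) 0 (by simp) a 0 ha

/-- For `ω = 0` the non-split endomorphisms of `P_l` are the multiples of `t`, and `t² = 0`. -/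
theorem endo_comp_eq_zero (C : Config k V G D ω ω₀ ω₁ col) (hω : ω = 0) (l : V)
    (h h' : C.P l ⟶ C.P l) (hh : ¬ IsSplitEpi h) (hh' : ¬ IsSplitEpi h') : h ≫ h' = 0 := by
  obtain ⟨t, ht, hspan, -⟩ := C.endo_zero hω l
  obtain ⟨a, b, rfl⟩ := hspan h
  obtain ⟨a', b', rfl⟩ := hspan h'
  have ha : a = 0 := by
    by_contra ha
    exact hh (isSplitEpi_of_smul_add _ t ht a b ha)
  have ha' : a' = 0 := by
    by_contra ha'
    exact hh' (isSplitEpi_of_smul_add _ t ht a' b' ha')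
  simp [ha, ha', ht]

theorem hom_eq_zero_of_col_eq (C : Config k V G D ω ω₀ ω₁ col) {i j : V} (hij : i ≠ j)
    (hc : col i = col j) (h : C.P i ⟶ C.P j) : h = 0 := by
  have hadj : ¬ G.Adj i j := by
    intro hadj
    have := C.bipartite i j hadj
    rw [hc] at this
    simp at this
  have h0 := C.nonadj i j hij hadj 0 (h ≫ (shiftFunctorZero D ℤ).inv.app (C.P j))
  rw [← cancel_mono ((shiftFunctorZero D ℤ).inv.app (C.P j)), h0, zero_comp]

/-- The contribution to `g₀[ω] ∘ f'` of one summand of `⊕ P_k^{y_k}` vanishes. -/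
theorem summand_eq_zero (C : Config k V G D ω ω₀ ω₁ col) (l j : V) (hc : col j = col l)
    (L Q A : D) (e : C.P l ≅ L) (a : A ⟶ L) [IsIso a] (f' : L ⟶ Q⟦ω⟧)
    (ι : C.P j ⟶ Q) (π : Q ⟶ C.P j) (hιπ : ι ≫ π = 𝟙 _)
    (hf' : ∀ g : Q ⟶ C.P j, IsSplitEpi g → ¬ IsSplitEpi (a ≫ f' ≫ (shiftFunctor D ω).map g))
    (g₀ : Q ⟶ C.P l) (hg₀ : ¬ IsSplitEpi g₀) :
    f' ≫ (shiftFunctor D ω).map (π ≫ ι ≫ g₀) = 0 := by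
  by_cases hj : j = l
  swap
  · rw [hom_eq_zero_of_col_eq C hj hc (ι ≫ g₀)]
    simp
  subst hj
  have hh : ¬ IsSplitEpi (ι ≫ g₀) := by
    intro hs
    refine hg₀ (IsSplitEpi.mk' ⟨section_ (ι ≫ g₀) ≫ ι, ?_⟩)
    simp
  by_cases hω : ω = 0
  swap
  · rw [endo_eq_zero_of_ne C hω j _ hh]
    simp
  subst hω
  have hπ := hf' π (IsSplitEpi.mk' ⟨ι, hιπ⟩)
  let z := (shiftFunctorZero D ℤ).app (C.P j)
  have hq : ¬ IsSplitEpi (e.hom ≫ f' ≫ (shiftFunctor D (0 : ℤ)).map π ≫ z.hom) := by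
    intro hs
    apply hπ
    have heq : a ≫ f' ≫ (shiftFunctor D (0 : ℤ)).map π =
        (a ≫ e.inv) ≫ (e.hom ≫ f' ≫ (shiftFunctor D (0 : ℤ)).map π ≫ z.hom) ≫ z.inv := by
      simp
    rw [heq]
    infer_instance
  have h0 := endo_comp_eq_zero C rfl j _ _ hq hh
  rw [← cancel_epi e.hom, ← cancel_mono z.hom, comp_zero, zero_comp, ← h0]
  have hn := (shiftFunctorZero D ℤ).hom.naturality (ι ≫ g₀)
  simp only [Functor.id_map] at hn
  simp only [Category.assoc, (shiftFunctor D (0 : ℤ)).map_comp, z, Iso.app_hom] at hn ⊢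
  rw [hn]

theorem statement11 (hADE : IsADE G) (C : Config k V G D ω ω₀ ω₁ col)
    (X : TwoTerm C) (hX : RightProper X)
    (l : V) (hl : col l = X.u + 1)
    (L : TwoTerm C) (hLu : L.u = X.u)
    (hLx : ∀ j : V, L.x j = 0)
    (hLy : L.y = fun j => if j = l then 1 else 0)
    (hLφ : L.φ = 0) (hLα : IsIso L.α) (hLX : Nonempty (L.X ≅ C.P l))
    (f : L.X ⟶ (X.X)⟦ω⟧) (hf : IsRightSocle L X f) :
    f = 0 := by
  obtain ⟨f', rfl, hf'⟩ := hf
  obtain ⟨e'⟩ := hLX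
  let e := e'.symm
  by_contra hne
  have hF : e.hom ≫ f' ≫ (shiftFunctor D ω).map X.α ≠ 0 := by
    intro h
    rw [← comp_zero (f := e.hom), cancel_epi] at h
    exact hne h
  obtain ⟨g, hg⟩ := C.pairing_left l X.X ω _ hF
  apply hg
  let z : (C.P l)⟦ω - ω⟧ ≅ C.P l := (shiftFunctorZero' D (ω - ω) (by simp)).app (C.P l)
  let g₀ : objOf C X.y ⟶ C.P l := X.α ≫ g ≫ z.hom
  have hφ : X.φ ≫ g₀ = 0 := by
    have h : X.φ ≫ X.α = 0 := comp_distTriang_mor_zero₁₂ _ X.tri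
    simp only [g₀]
    rw [← Category.assoc, h, zero_comp]
  have hg₀ : ¬ IsSplitEpi g₀ := fun hs => hX l hl g₀ hs hφ
  let ι : ∀ p : (Σ j : V, Fin (X.y j)), C.P p.1 ⟶ objOf C X.y := fun p =>
    biproduct.ι (fun p : (Σ j : V, Fin (X.y j)) => C.P p.1) p
  let π : ∀ p : (Σ j : V, Fin (X.y j)), objOf C X.y ⟶ C.P p.1 := fun p =>
    biproduct.π (fun p : (Σ j : V, Fin (X.y j)) => C.P p.1) p
  have hsum : g₀ = ∑ p, π p ≫ ι p ≫ g₀ := by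
    have ht : ∑ p, π p ≫ ι p = 𝟙 (objOf C X.y) := biproduct.total
    calc g₀ = (∑ p, π p ≫ ι p) ≫ g₀ := by rw [ht, Category.id_comp]
      _ = ∑ p, π p ≫ ι p ≫ g₀ := by simp only [Preadditive.sum_comp, Category.assoc]
  have hzero : f' ≫ (shiftFunctor D ω).map g₀ = 0 := by
    rw [hsum, Functor.map_sum, Preadditive.comp_sum]
    refine Finset.sum_eq_zero fun p _ => ?_
    have hcol : col p.1 = X.u + 1 := X.hy p.1 (Nat.ne_zero_of_lt p.2.2)
    exact summand_eq_zero C l p.1 (hcol.trans hl.symm) L.X _ _ e L.α f' (ι p) (π p)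
      (biproduct.ι_π_self _ p) (hf' p.1 hcol) g₀ hg₀
  have hzero' : f' ≫ (shiftFunctor D ω).map (X.α ≫ g) = 0 := by
    rw [← cancel_mono ((shiftFunctor D ω).map z.hom), zero_comp, Category.assoc,
      ← Functor.map_comp, Category.assoc]
    exact hzero
  refine ⟨0, ?_⟩
  rw [Functor.map_comp] at hzero'
  simp only [Category.assoc, zero_smul]
  rw [reassoc_of% hzero']
  simp

end Statement11
end

section
/- Suppose ω ≠ 0. Let X and Y be two-term objects associated to the same parameter u ∈ {0,1}, and suppose X is left-proper. Then every morphism f : X → Y[ω] is a right socle morphism. -/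
/-!
STATEMENT 12: for ω ≠ 0, every morphism X → Y[ω] out of a left-proper two-term object
is a right socle morphism.
-/

/-!
Write `a = ω_u`, let `A[-a] → B → X → A[1-a]` be the triangle of `X`, and let `A'[-a] → B' → Y` be
the one of `Y`. The obstruction to lifting `f : X → Y[ω]` along `α_Y[ω]` lies in
`Hom(X, A'[1-a+ω])`, and this group is zero (`obstruction_eq_zero`): since
`Hom(B, A'[1+ω_{u+1}]) = 0` for degree reasons, every such morphism comes from `Hom(A, A'[ω])`, and
the part of it factoring through `φ_X` dies on `X`. That all of it factors through `φ_X` is dual,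
under the spherical pairing, to the injectivity of `Hom(P_l, A) → Hom(P_l, B[a])`
(`factor_through`), and this injectivity is left-properness, because for `ω ≠ 0` every nonzero
morphism `P_l → A` is a split monomorphism (`eq_zero_or_isSplitMono`).

The remaining condition on the lift holds automatically: no morphism `B → P_l[ω]` is a split
epimorphism, since a section would involve a nonzero element of `Hom^{-ω}(P_l, P_l) = 0`
(`not_isSplitEpi`).

The duality step is carried out in the unshifted groups `Hom(P_l, A)` and `Hom(A, P_l[ω])`, so that
only `k`-bilinearity of composition is used and not `k`-linearity of the shift functors.
-/

open CategoryTheory CategoryTheory.Limits CategoryTheory.Pretriangulated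

namespace Statement12

universe v u

def typeA (n : ℕ) : SimpleGraph (Fin n) :=
  SimpleGraph.fromRel (fun i j => (i : ℕ) + 1 = (j : ℕ))

def typeD (n : ℕ) : SimpleGraph (Fin n) :=
  SimpleGraph.fromRel
    (fun i j => (1 ≤ (i : ℕ) ∧ (i : ℕ) + 1 = (j : ℕ)) ∨ ((i : ℕ) = 0 ∧ (j : ℕ) = 2))

def typeE (n : ℕ) : SimpleGraph (Fin n) :=
  SimpleGraph.fromRel
    (fun i j => (1 ≤ (i : ℕ) ∧ (i : ℕ) + 1 = (j : ℕ)) ∨ ((i : ℕ) = 0 ∧ (j : ℕ) = 3))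

def IsADE {V : Type*} (G : SimpleGraph V) : Prop :=
  (∃ n : ℕ, 1 ≤ n ∧ Nonempty (G ≃g typeA n)) ∨
  (∃ n : ℕ, 4 ≤ n ∧ Nonempty (G ≃g typeD n)) ∨
  (∃ n : ℕ, (n = 6 ∨ n = 7 ∨ n = 8) ∧ Nonempty (G ≃g typeE n))

/-- The canonical generator of the "span of the identity" inside `Hom^ω(P, P)`:
for `ω = 0` it is the identity of `P` (transported to `P ⟶ P⟦0⟧`), and for `ω ≠ 0`
it is zero (the identity has degree `0 ≠ ω`). -/
noncomputable def unitClass (D : Type u) [Category.{v} D] [Preadditive D] [HasShift D ℤ]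
    (ω : ℤ) (P : D) : P ⟶ P⟦ω⟧ :=
  if h : ω = 0 then (shiftFunctorZero D ℤ).inv.app P ≫ eqToHom (by rw [h]) else 0

/-- A `Γ`-configuration `{P i}` of `ω`-spherical objects in a `k`-linear triangulated
category `D`, normalized with respect to a 2-colouring `col` of `Γ₀` and a decomposition
`ω = ω₀ + ω₁` so that `Hom^*(P i, P j)` is concentrated in degree `ω_u` when
`col i = u` and `j` is a neighbour of `i`. -/
structure Config (k : Type) [Field k] (V : Type) [Fintype V] [DecidableEq V]
    (G : SimpleGraph V)
    (D : Type u) [Category.{v} D] [Preadditive D] [CategoryTheory.Linear k D]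
    [HasZeroObject D] [HasShift D ℤ] [∀ n : ℤ, (shiftFunctor D n).Additive]
    [Pretriangulated D] [HasFiniteBiproducts D]
    (ω ω₀ ω₁ : ℤ) (col : V → ZMod 2) : Type (max u v) where
  P : V → D
  /-- spherical condition (i): `Hom^*(X, P i)` is finite dimensional for every `X` -/
  finiteness : ∀ (i : V) (X : D),
    FiniteDimensional k (DirectSum ℤ (fun n : ℤ => X ⟶ (P i)⟦n⟧))
  id_ne : ∀ i : V, 𝟙 (P i) ≠ 0
  /-- spherical condition (ii): `Hom^n(P i, P i) = 0` unless `n ∈ {0, ω}` -/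
  vanish : ∀ (i : V) (n : ℤ), n ≠ 0 → n ≠ ω → ∀ f : P i ⟶ (P i)⟦n⟧, f = 0
  /-- spherical condition (ii) for `ω = 0`: `End P i ≅ k[t]/(t²)` -/
  endo_zero : ω = 0 → ∀ i : V, ∃ t : P i ⟶ P i, t ≫ t = 0 ∧
      (∀ f : P i ⟶ P i, ∃ a b : k, f = a • 𝟙 (P i) + b • t) ∧
      (∀ a b : k, a • 𝟙 (P i) + b • t = 0 → a = 0 ∧ b = 0)
  /-- spherical condition (ii) for `ω ≠ 0`: `Hom^0 = k·id` and `Hom^ω` is a line -/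
  endo_ne : ω ≠ 0 → ∀ i : V, (∀ f : P i ⟶ P i, ∃ a : k, f = a • 𝟙 (P i)) ∧
      (∃ t : P i ⟶ (P i)⟦ω⟧, t ≠ 0 ∧ ∀ f : P i ⟶ (P i)⟦ω⟧, ∃ a : k, f = a • t)
  /-- spherical condition (iii): nondegeneracy of the composition pairing
  `Hom^*(P i, X) × Hom^*(X, P i) → Hom^*(P i, P i)/⟨Id⟩ ≅ k` in the first variable -/
  pairing_left : ∀ (i : V) (X : D) (n : ℤ) (f : P i ⟶ X⟦n⟧), f ≠ 0 →
      ∃ g : X ⟶ (P i)⟦ω - n⟧, ¬ ∃ a : k,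
        f ≫ (shiftFunctor D n).map g ≫
            (shiftFunctorAdd' D (ω - n) n ω (by ring)).inv.app (P i)
          = a • unitClass D ω (P i)
  /-- spherical condition (iii): nondegeneracy in the second variable -/
  pairing_right : ∀ (i : V) (X : D) (m : ℤ) (g : X ⟶ (P i)⟦m⟧), g ≠ 0 →
      ∃ f : P i ⟶ X⟦ω - m⟧, ¬ ∃ a : k,
        f ≫ (shiftFunctor D (ω - m)).map g ≫
            (shiftFunctorAdd' D m (ω - m) ω (by ring)).inv.app (P i)
          = a • unitClass D ω (P i)
  /-- the 2-colouring is proper: adjacent vertices have different colours -/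
  bipartite : ∀ i j : V, G.Adj i j → col j = col i + 1
  homega : ω₀ + ω₁ = ω
  /-- normalization: for `i ∈ V^u` and `j ∈ N(i)`, `Hom^*(P i, P j)` is concentrated
  in degree `ω_u` -/
  adj_conc : ∀ i j : V, G.Adj i j → ∀ n : ℤ,
      n ≠ (if col i = 0 then ω₀ else ω₁) → ∀ f : P i ⟶ (P j)⟦n⟧, f = 0
  /-- `Hom^*(P i, P j)` is one-dimensional for adjacent `i`, `j` -/
  adj_one : ∀ i j : V, G.Adj i j →
      ∃ γ : P i ⟶ (P j)⟦if col i = 0 then ω₀ else ω₁⟧, γ ≠ 0 ∧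
        ∀ f : P i ⟶ (P j)⟦if col i = 0 then ω₀ else ω₁⟧, ∃ a : k, f = a • γ
  /-- `Hom^*(P i, P j) = 0` for distinct non-adjacent `i`, `j` -/
  nonadj : ∀ i j : V, i ≠ j → ¬ G.Adj i j → ∀ (n : ℤ) (f : P i ⟶ (P j)⟦n⟧), f = 0

variable {k : Type} [Field k] {V : Type} [Fintype V] [DecidableEq V]
  {G : SimpleGraph V} [DecidableRel G.Adj]
  {D : Type u} [Category.{v} D] [Preadditive D] [CategoryTheory.Linear k D]
  [HasZeroObject D] [HasShift D ℤ] [∀ n : ℤ, (shiftFunctor D n).Additive]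
  [Pretriangulated D] [HasFiniteBiproducts D]
  {ω ω₀ ω₁ : ℤ} {col : V → ZMod 2}

/-- `ω_u` for `u ∈ ℤ/2`. -/
def ωsel (ω₀ ω₁ : ℤ) (u : ZMod 2) : ℤ := if u = 0 then ω₀ else ω₁

/-- The object `⊕_{j} P_j^{x_j}` attached to a multiplicity function `x : V → ℕ`. -/
noncomputable def objOf (C : Config k V G D ω ω₀ ω₁ col) (x : V → ℕ) : D :=
  biproduct (fun p : (Σ j : V, Fin (x j)) => C.P p.1)

/-- A two-term object: an object `X` fitting into a distinguished triangle
`X[−1] --β--> ⊕_{j∈V^u} P_j^{x_j}[−ω_u] --φ--> ⊕_{l∈V^{u+1}} P_l^{y_l} --α--> X`. -/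
structure TwoTerm (C : Config k V G D ω ω₀ ω₁ col) : Type (max u v) where
  u : ZMod 2
  x : V → ℕ
  y : V → ℕ
  hx : ∀ j : V, x j ≠ 0 → col j = u
  hy : ∀ j : V, y j ≠ 0 → col j = u + 1
  X : D
  φ : (objOf C x)⟦-(ωsel ω₀ ω₁ u)⟧ ⟶ objOf C y
  α : objOf C y ⟶ X
  β : X⟦(-1 : ℤ)⟧ ⟶ (objOf C x)⟦-(ωsel ω₀ ω₁ u)⟧
  tri : Triangle.mk φ α ((shiftEquiv D (1 : ℤ)).counitIso.inv.app X ≫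
          (shiftFunctor D (1 : ℤ)).map β) ∈ distTriang D

/-- `X` is right-proper: `f ∘ φ_X ≠ 0` for every split epimorphism
`f : ⊕ P_l^{y_l} → P_l`. -/
def RightProper {C : Config k V G D ω ω₀ ω₁ col} (T : TwoTerm C) : Prop :=
  ∀ l : V, col l = T.u + 1 → ∀ f : objOf C T.y ⟶ C.P l, IsSplitEpi f → T.φ ≫ f ≠ 0

/-- `X` is left-proper: `φ_X ∘ g[−ω_u] ≠ 0` for every split monomorphism
`g : P_l → ⊕ P_j^{x_j}`. -/
def LeftProper {C : Config k V G D ω ω₀ ω₁ col} (T : TwoTerm C) : Prop :=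
  ∀ l : V, col l = T.u → ∀ g : C.P l ⟶ objOf C T.x, IsSplitMono g →
    (shiftFunctor D (-(ωsel ω₀ ω₁ T.u))).map g ≫ T.φ ≠ 0

/-- `f : X ⟶ Y[ω]` is a right socle morphism. -/
def IsRightSocle {C : Config k V G D ω ω₀ ω₁ col} (X Y : TwoTerm C)
    (f : X.X ⟶ (Y.X)⟦ω⟧) : Prop :=
  ∃ f' : X.X ⟶ (objOf C Y.y)⟦ω⟧,
    f = f' ≫ (shiftFunctor D ω).map Y.α ∧
    ∀ l : V, col l = Y.u + 1 → ∀ g : objOf C Y.y ⟶ C.P l, IsSplitEpi g →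
      ¬ IsSplitEpi (X.α ≫ f' ≫ (shiftFunctor D ω).map g)


set_option linter.unusedSectionVars false

section Helpers

/-- The inclusion of a summand of `⊕ P_j^{x_j}`. -/
noncomputable def objι (C : Config k V G D ω ω₀ ω₁ col) (x : V → ℕ) (p : Σ j : V, Fin (x j)) :
    C.P p.1 ⟶ objOf C x :=
  biproduct.ι (fun p : (Σ j : V, Fin (x j)) => C.P p.1) p

/-- The projection of `⊕ P_j^{x_j}` onto a summand. -/
noncomputable def objπ (C : Config k V G D ω ω₀ ω₁ col) (x : V → ℕ) (p : Σ j : V, Fin (x j)) :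
    objOf C x ⟶ C.P p.1 :=
  biproduct.π (fun p : (Σ j : V, Fin (x j)) => C.P p.1) p

lemma obj_total (C : Config k V G D ω ω₀ ω₁ col) (x : V → ℕ) :
    ∑ p, objπ C x p ≫ objι C x p = 𝟙 (objOf C x) :=
  biproduct.total

lemma eq_zero_of_objι (C : Config k V G D ω ω₀ ω₁ col) (x : V → ℕ) {W : D} (h : objOf C x ⟶ W)
    (H : ∀ p, objι C x p ≫ h = 0) : h = 0 :=
  biproduct.hom_ext' _ _ fun p => (H p).trans comp_zero.symm

/-- To factor a morphism into `F (⊕ P_j^{x_j})` (with `F` additive) through `ψ`, it suffices to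
factor its components. -/
lemma factor_of_components (C : Config k V G D ω ω₀ ω₁ col) (x : V → ℕ) (F : D ⥤ D) [F.Additive]
    {W W' : D} (ψ : W ⟶ W') (h : W ⟶ F.obj (objOf C x))
    (H : ∀ p : (Σ j : V, Fin (x j)), ∃ e : W' ⟶ F.obj (C.P p.1),
      h ≫ F.map (objπ C x p) = ψ ≫ e) :
    ∃ e : W' ⟶ F.obj (objOf C x), h = ψ ≫ e := by
  choose e he using H
  refine ⟨∑ p, e p ≫ F.map (objι C x p), ?_⟩
  have h1 : F.map (∑ p, objπ C x p ≫ objι C x p) = 𝟙 (F.obj (objOf C x)) := by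
    rw [obj_total, F.map_id]
  rw [← Category.comp_id h, ← h1, F.map_sum, Preadditive.comp_sum, Preadditive.comp_sum]
  refine Finset.sum_congr rfl fun p _ => ?_
  rw [F.map_comp, ← Category.assoc, he p, Category.assoc]

lemma eq_zero_of_components (C : Config k V G D ω ω₀ ω₁ col) (x : V → ℕ) (F : D ⥤ D) [F.Additive]
    {W : D} (h : W ⟶ F.obj (objOf C x))
    (H : ∀ p : (Σ j : V, Fin (x j)),
      h ≫ F.map (objπ C x p) = 0) : h = 0 := by
  obtain ⟨e, he⟩ := factor_of_components C x F (0 : W ⟶ W) h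
    (fun p => ⟨0, by rw [H p, zero_comp]⟩)
  rw [he, zero_comp]

lemma Config.eq_zero_of_same_col (C : Config k V G D ω ω₀ ω₁ col) {i j : V}
    (hij : i ≠ j) (hc : col i = col j) (n : ℤ) (f : C.P i ⟶ (C.P j)⟦n⟧) : f = 0 := by
  refine C.nonadj i j hij (fun hadj => ?_) n f
  have := C.bipartite i j hadj
  rw [hc] at this
  exact absurd this.symm (by simp)

/-- Every degree-zero morphism from `P_l` to a sum of `P_j`'s of the same colour is zero or a
split monomorphism, because `End P_l = k` for `ω ≠ 0`. -/
lemma eq_zero_or_isSplitMono (C : Config k V G D ω ω₀ ω₁ col) (hω : ω ≠ 0) (x : V → ℕ)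
    (c : ZMod 2) (hx : ∀ j : V, x j ≠ 0 → col j = c) (l : V) (hl : col l = c)
    (g : C.P l ⟶ objOf C x) : g = 0 ∨ IsSplitMono g := by
  by_cases H : ∀ p : (Σ j : V, Fin (x j)),
      g ≫ (objπ C x p) = 0
  · left
    exact eq_zero_of_components C x (𝟭 D) g H
  · right
    push Not at H
    obtain ⟨⟨j, m⟩, hp⟩ := H
    have hj : col j = c := hx j (by have := m.2; omega)
    by_cases hlj : l = j
    · subst hlj
      obtain ⟨a, ha⟩ := (C.endo_ne hω l).1
        (g ≫ (objπ C x ⟨l, m⟩))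
      have ha0 : a ≠ 0 := by
        rintro rfl
        exact hp (by rw [ha, zero_smul])
      refine IsSplitMono.mk' ⟨a⁻¹ •
        objπ C x ⟨l, m⟩, ?_⟩
      refine (Linear.comp_smul _ _ _ _ _ _).trans ?_
      rw [ha, smul_smul, inv_mul_cancel₀ ha0, one_smul]
    · exfalso
      apply hp
      rw [← cancel_mono ((shiftFunctorZero D ℤ).inv.app (C.P j)), zero_comp]
      exact C.eq_zero_of_same_col hlj (hl.trans hj.symm) 0 _

/-- The composition pairing `Hom(P_l, A) × Hom(A, P_l[ω]) → Hom(P_l, P_l[ω])`, for `A` a sum of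
`P_j`'s of the colour of `l`, has zero kernel in the second variable. -/
lemma exists_comp_ne_zero (C : Config k V G D ω ω₀ ω₁ col) (x : V → ℕ)
    (c : ZMod 2) (hx : ∀ j : V, x j ≠ 0 → col j = c) (l : V) (hl : col l = c)
    (h : objOf C x ⟶ (C.P l)⟦ω⟧) (hh : h ≠ 0) : ∃ g : C.P l ⟶ objOf C x, g ≫ h ≠ 0 := by
  by_contra! H
  apply hh
  refine eq_zero_of_objι C x h fun ⟨j, m⟩ => ?_
  have hj : col j = c := hx j (by have := m.2; omega)
  by_cases hlj : j = l
  · subst hlj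
    exact H _
  · exact C.eq_zero_of_same_col hlj (hj.trans hl.symm) ω _

lemma finiteDimensional_hom (C : Config k V G D ω ω₀ ω₁ col) (l : V) (W : D) (n : ℤ) :
    FiniteDimensional k (W ⟶ (C.P l)⟦n⟧) := by
  have := C.finiteness l W
  exact FiniteDimensional.of_injective
    (DirectSum.lof k ℤ (fun n : ℤ => W ⟶ (C.P l)⟦n⟧) n) (DirectSum.of_injective n)

/-- By sphericity, a morphism `P_l → B[a]` killed by all morphisms
`B[a] → P_l[ω]` vanishes. -/
lemma eq_zero_of_comp_eq_zero (C : Config k V G D ω ω₀ ω₁ col) (l : V) (B : D)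
    (a : ℤ) (f : C.P l ⟶ B⟦a⟧) (H : ∀ h : B⟦a⟧ ⟶ (C.P l)⟦ω⟧, f ≫ h = 0) : f = 0 := by
  by_contra hf
  obtain ⟨g, hg⟩ := C.pairing_left l B a f hf
  exact hg ⟨0, by rw [H, zero_smul]⟩

/-- The duality step: if composition with `ψ : A → B[a]` is injective on `Hom(P_l, A)`, then
composition with `ψ` from `Hom(B[a], P_l[ω])` to `Hom(A, P_l[ω])` is surjective. -/
lemma factor_through (C : Config k V G D ω ω₀ ω₁ col) (hω : ω ≠ 0) (x : V → ℕ)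
    (c : ZMod 2) (hx : ∀ j : V, x j ≠ 0 → col j = c) (l : V) (hl : col l = c)
    (B : D) (a : ℤ) (ψ : objOf C x ⟶ B⟦a⟧)
    (hψ : ∀ g : C.P l ⟶ objOf C x, g ≫ ψ = 0 → g = 0)
    (h : objOf C x ⟶ (C.P l)⟦ω⟧) : ∃ h' : B⟦a⟧ ⟶ (C.P l)⟦ω⟧, h = ψ ≫ h' := by
  have := finiteDimensional_hom C l (objOf C x) ω
  obtain ⟨t, ht, htspan⟩ := (C.endo_ne hω l).2
  -- A linear form on the line `Hom(P_l, P_l[ω])` that detects zero.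
  obtain ⟨e, he⟩ : ∃ e : (C.P l ⟶ (C.P l)⟦ω⟧) →ₗ[k] k, e t ≠ 0 := by
    by_contra! H
    exact ht ((Module.forall_dual_apply_eq_zero_iff k t).1 H)
  have he0 : ∀ s, e s = 0 → s = 0 := by
    intro s hs
    obtain ⟨r, rfl⟩ := htspan s
    rw [map_smul, smul_eq_mul, mul_eq_zero] at hs
    rcases hs with hs | hs
    · rw [hs, zero_smul]
    · exact absurd hs he
  let p : (C.P l ⟶ objOf C x) →ₗ[k] Module.Dual k (objOf C x ⟶ (C.P l)⟦ω⟧) :=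
    (Linear.comp (C.P l) (objOf C x) ((C.P l)⟦ω⟧)).compr₂ e
  have hp : ∀ g h, p g h = e (g ≫ h) := fun g h => rfl
  -- Nondegeneracy makes every functional a pairing with some `g : P_l → A`.
  have hrange : LinearMap.range p = ⊤ := by
    have h1 : (LinearMap.range p).dualCoannihilator = ⊥ := by
      rw [eq_bot_iff]
      intro y hy
      rw [Submodule.mem_dualCoannihilator] at hy
      rw [Submodule.mem_bot]
      by_contra hne
      obtain ⟨g, hg⟩ := exists_comp_ne_zero C x c hx l hl y hne
      exact hg (he0 _ (hy _ ⟨g, rfl⟩))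
    rw [← Subspace.dualCoannihilator_dualAnnihilator_eq (W := LinearMap.range p), h1,
      Submodule.dualAnnihilator_bot]
  let S : Submodule k (objOf C x ⟶ (C.P l)⟦ω⟧) :=
    LinearMap.range (Linear.leftComp k ((C.P l)⟦ω⟧) ψ)
  suffices hS : h ∈ S by
    obtain ⟨h', hh'⟩ := hS
    exact ⟨h', hh'.symm⟩
  by_contra hhS
  obtain ⟨F, hF, hFS⟩ := Submodule.exists_le_ker_of_notMem hhS
  obtain ⟨g, hg⟩ : F ∈ LinearMap.range p := by rw [hrange]; trivial
  have hg0 : g = 0 := by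
    apply hψ
    apply eq_zero_of_comp_eq_zero C l B a
    intro h'
    rw [Category.assoc]
    apply he0
    rw [← hp, hg]
    exact hFS ⟨h', rfl⟩
  apply hF
  rw [← hg, hg0, map_zero, LinearMap.zero_apply]

/-- The duality step for a morphism `φ : A[-a] → B` that is left-proper at `l`: every morphism
`A[-a] → P_l[ω][-a]` factors through `φ`. -/
lemma factor_through_φ (C : Config k V G D ω ω₀ ω₁ col) (hω : ω ≠ 0) (x : V → ℕ)
    (c : ZMod 2) (hx : ∀ j : V, x j ≠ 0 → col j = c) (l : V) (hl : col l = c) (a : ℤ) {B : D}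
    (φ : (objOf C x)⟦-a⟧ ⟶ B)
    (hφ : ∀ g : C.P l ⟶ objOf C x, IsSplitMono g → (shiftFunctor D (-a)).map g ≫ φ ≠ 0)
    (h : objOf C x ⟶ (C.P l)⟦ω⟧) :
    ∃ h' : B ⟶ ((C.P l)⟦ω⟧)⟦-a⟧, (shiftFunctor D (-a)).map h = φ ≫ h' := by
  let i : B⟦a⟧⟦-a⟧ ≅ B := (shiftFunctorCompIsoId D a (-a) (by ring)).app _
  obtain ⟨ψ, hψ⟩ := (shiftFunctor D (-a)).map_surjective (φ ≫ i.inv)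
  obtain ⟨h', hh'⟩ := factor_through C hω x c hx l hl B a ψ (by
    intro g hg
    rcases eq_zero_or_isSplitMono C hω x c hx l hl g with h0 | h0
    · exact h0
    · exfalso
      refine hφ g h0 ?_
      rw [← cancel_mono i.inv, zero_comp, Category.assoc, ← hψ, ← Functor.map_comp, hg,
        Functor.map_zero]) h
  refine ⟨i.inv ≫ (shiftFunctor D (-a)).map h', ?_⟩
  rw [hh', Functor.map_comp, hψ, Category.assoc]

/-- If all `k` occurring in `⊕ P_k^{y_k}` have the colour of `l`, no morphism
`⊕ P_k^{y_k} → P_l[ω]` is a split epimorphism: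
a section would have nonzero components in `Hom^{-ω}(P_l, P_l) = 0`. -/
lemma not_isSplitEpi (C : Config k V G D ω ω₀ ω₁ col) (hω : ω ≠ 0) (y : V → ℕ)
    (c : ZMod 2) (hy : ∀ j : V, y j ≠ 0 → col j = c) (l : V) (hl : col l = c)
    (q : objOf C y ⟶ (C.P l)⟦ω⟧) : ¬ IsSplitEpi q := by
  rintro ⟨⟨s, hs⟩⟩
  have hend : ∀ r : (C.P l)⟦ω⟧ ⟶ C.P l, r = 0 := by
    intro r
    apply (shiftFunctor D (-ω)).map_injective
    rw [Functor.map_zero, ← cancel_epi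
      ((shiftFunctorCompIsoId D ω (-ω) (by ring)).inv.app (C.P l)), comp_zero]
    exact C.vanish l (-ω) (by omega) (by omega) _
  have h2 : 𝟙 ((C.P l)⟦ω⟧) = 0 := by
    rw [← hs, ← Category.comp_id s, ← obj_total, Preadditive.comp_sum, Preadditive.sum_comp]
    refine Finset.sum_eq_zero fun ⟨j, m⟩ _ => ?_
    have hj : col j = c := hy j (by have := m.2; omega)
    by_cases hlj : j = l
    · subst hlj
      have := hend (s ≫ objπ C y ⟨j, m⟩)
      rw [← Category.assoc s, this, zero_comp, zero_comp]
    · have := C.eq_zero_of_same_col hlj (hj.trans hl.symm) ω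
        (objι C y ⟨j, m⟩ ≫ q)
      rw [Category.assoc, Category.assoc, this, comp_zero, comp_zero]
  apply C.id_ne l
  apply (shiftFunctor D ω).map_injective
  rw [CategoryTheory.Functor.map_id, h2, Functor.map_zero]

/-- Degree reasons: `Hom(P_i, P_j[1 + ω - ω_u]) = 0` for `i` of colour `u + 1` and `j` of colour
`u`, since `Hom^*(P_i, P_j)` lives in degree `ω_{u+1} = ω - ω_u`. -/
lemma hom_eq_zero_of_degree (C : Config k V G D ω ω₀ ω₁ col) (c : ZMod 2) (i j : V)
    (hi : col i = c + 1) (hj : col j = c)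
    (f : C.P i ⟶ (C.P j)⟦-(ωsel ω₀ ω₁ c)⟧⟦(1 : ℤ)⟧⟦ω⟧) : f = 0 := by
  rw [← cancel_mono ((shiftFunctor D ω).map ((shiftFunctorAdd' D (-(ωsel ω₀ ω₁ c)) 1
      (-(ωsel ω₀ ω₁ c) + 1) rfl).inv.app (C.P j)) ≫
    (shiftFunctorAdd' D (-(ωsel ω₀ ω₁ c) + 1) ω (-(ωsel ω₀ ω₁ c) + 1 + ω) rfl).inv.app (C.P j)),
    zero_comp]
  have hsum : ωsel ω₀ ω₁ c + (if col i = 0 then ω₀ else ω₁) = ω := by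
    rw [← C.homega, hi]
    unfold ωsel
    have : c = 0 ∨ c = 1 := by clear hi hj f; revert c; decide
    rcases this with rfl | rfl
    · simp
    · have h2 : (1 : ZMod 2) + 1 = 0 := by decide
      simp [h2, add_comm]
  by_cases hadj : G.Adj i j
  · exact C.adj_conc i j hadj _ (by omega) _
  · refine C.nonadj i j ?_ hadj _ _
    rintro rfl
    rw [hi] at hj
    exact absurd hj (by simp)

/-- Every morphism `X → A'[-ω_u][1][ω]` vanishes, where `A'` is a sum of `P_j`'s of colour `u` and
`X` is left-proper: this is the obstruction to lifting `X → Y[ω]` along `α_Y[ω]`. -/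
lemma obstruction_eq_zero (C : Config k V G D ω ω₀ ω₁ col) (hω : ω ≠ 0) (X : TwoTerm C)
    (hX : LeftProper X) (x : V → ℕ) (hx : ∀ j : V, x j ≠ 0 → col j = X.u)
    (ε : X.X ⟶ (objOf C x)⟦-(ωsel ω₀ ω₁ X.u)⟧⟦(1 : ℤ)⟧⟦ω⟧) : ε = 0 := by
  apply eq_zero_of_components C x (shiftFunctor D (-(ωsel ω₀ ω₁ X.u)) ⋙
    shiftFunctor D (1 : ℤ) ⋙ shiftFunctor D ω)
  rintro ⟨l, m⟩
  have hl : col l = X.u := hx l (by have := m.2; omega)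
  generalize hε' : (_ ≫ _ : X.X ⟶ _) = ε'
  change X.X ⟶ (C.P l)⟦-(ωsel ω₀ ω₁ X.u)⟧⟦(1 : ℤ)⟧⟦ω⟧ at ε'
  have h1 : X.α ≫ ε' = 0 := by
    refine eq_zero_of_objι C X.y _ fun ⟨j, n⟩ => ?_
    exact hom_eq_zero_of_degree C X.u j l (X.hy j (by have := n.2; omega)) hl _
  obtain ⟨δ, η, hη, hδ⟩ : ∃ (δ : X.X ⟶ (objOf C X.x)⟦-(ωsel ω₀ ω₁ X.u)⟧⟦(1 : ℤ)⟧)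
      (η : (objOf C X.x)⟦-(ωsel ω₀ ω₁ X.u)⟧⟦(1 : ℤ)⟧ ⟶
        (C.P l)⟦-(ωsel ω₀ ω₁ X.u)⟧⟦(1 : ℤ)⟧⟦ω⟧),
      ε' = δ ≫ η ∧ δ ≫ (shiftFunctor D (1 : ℤ)).map X.φ = 0 := by
    obtain ⟨η, hη⟩ := Triangle.yoneda_exact₃ _ X.tri ε' h1
    exact ⟨_, η, hη, comp_distTriang_mor_zero₃₁ _ X.tri⟩
  -- Reordering the shifts of `P_l` turns `η` into `h[-ω_u][1]` for some `h : A → P_l[ω]`.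
  let i : (C.P l)⟦-(ωsel ω₀ ω₁ X.u)⟧⟦(1 : ℤ)⟧⟦ω⟧ ≅ (C.P l)⟦ω⟧⟦-(ωsel ω₀ ω₁ X.u)⟧⟦(1 : ℤ)⟧ :=
    (shiftFunctorComm D (1 : ℤ) ω).app _ ≪≫
      (shiftFunctor D (1 : ℤ)).mapIso ((shiftFunctorComm D (-(ωsel ω₀ ω₁ X.u)) ω).app _)
  obtain ⟨h₁, hh₁⟩ := (shiftFunctor D (1 : ℤ)).map_surjective (η ≫ i.hom)
  obtain ⟨h, rfl⟩ := (shiftFunctor D (-(ωsel ω₀ ω₁ X.u))).map_surjective h₁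
  obtain ⟨h', hh'⟩ := factor_through_φ C hω X.x X.u X.hx l hl _ X.φ (hX l hl) h
  rw [← cancel_mono i.hom, zero_comp, hη, Category.assoc, ← hh₁, hh', Functor.map_comp,
    ← Category.assoc, hδ, zero_comp]

/-- Shifted form of the exactness of `Hom(W, -)` at the third vertex of a distinguished
triangle. -/
lemma exists_lift_shift (T : Triangle D) (hT : T ∈ distTriang D) (n : ℤ) {W : D}
    (f : W ⟶ T.obj₃⟦n⟧) (hf : f ≫ (shiftFunctor D n).map T.mor₃ = 0) :
    ∃ f' : W ⟶ T.obj₂⟦n⟧, f = f' ≫ (shiftFunctor D n).map T.mor₂ := by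
  have hf0 : f ≫ (n.negOnePow • ((shiftFunctor D n).map T.mor₃ ≫
      (shiftFunctorComm D (1 : ℤ) n).hom.app T.obj₁)) = 0 := by
    rw [Linear.comp_units_smul, ← Category.assoc, hf, zero_comp, smul_zero]
  obtain ⟨g, hg⟩ : ∃ g : W ⟶ T.obj₂⟦n⟧, f = g ≫ (n.negOnePow • (shiftFunctor D n).map T.mor₂) :=
    Triangle.coyoneda_exact₃ _ (Triangle.shift_distinguished T hT n) f hf0
  exact ⟨n.negOnePow • g, by rw [hg, Linear.comp_units_smul, Linear.units_smul_comp]⟩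

end Helpers

theorem statement12 (hADE : IsADE G) (C : Config k V G D ω ω₀ ω₁ col)
    (hω : ω ≠ 0)
    (hsign : (ω ≤ 0 → ω₀ ≤ 0 ∧ ω₁ ≤ 0) ∧ (2 ≤ ω → 1 ≤ ω₀ ∧ 1 ≤ ω₁))
    (X Y : TwoTerm C) (hu : X.u = Y.u) (hX : LeftProper X)
    (f : X.X ⟶ (Y.X)⟦ω⟧) :
    IsRightSocle X Y f := by
  obtain ⟨f', hf'⟩ := exists_lift_shift _ Y.tri ω f (by
    have hx : ∀ j : V, Y.x j ≠ 0 → col j = X.u := by rw [hu]; exact Y.hx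
    have key := obstruction_eq_zero C hω X hX Y.x hx
    rw [hu] at key
    exact key _)
  refine ⟨f', hf', fun l hl g _ => ?_⟩
  exact not_isSplitEpi C hω X.y (X.u + 1) X.hy l (by rw [hl, hu]) _

end Statement12
end

section
/- Let T be an object of 𝔇 with Hom^*(Λ, T) ≠ 0 and let i ∈ V^u. Then: (a) if Hom^{r+ω}(P_i, T) ≠ 0 for some r ≤ min(T) − ω_{u+1} − 1, then P_i is a direct summand of T_r; (b) if Hom^{min(T)+ω}(P_j, T) = 0 for every j ∈ N(i) and Hom^{min(T)+ω−ω_{u+1}}(P_i, T) ≠ 0, then P_i is a direct summand of T_{min(T)−ω_{u+1}}; (c) if Hom^{r+ω}(P_i, T) ≠ 0 for some r ≥ max(T) − ω_{u+1} + 1, then P_i is a direct summand of T_r. -/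
/-!
Let `f : P i ⟶ T⟦r + ω⟧` be nonzero and let `g : P l ⟶ (P i)⟦n⟧` with `l ≠ i`. If `l` is not
adjacent to `i`, or if `n ≠ ω_{u+1}` where `u` is the colour of `i`, then `g = 0`. Otherwise
`g ≫ f⟦n⟧` has degree `r + ω + ω_{u+1}`, so `f` is long as soon as `Hom^{r+ω_{u+1}+ω}(P l, T) = 0`
for all neighbours `l` of `i` (`isLong_of_forall_adj`). In (a) and (c) the index
`r + ω_{u+1}` lies outside `[min T, max T]`, and vanishing for the summands of `Λ` follows from
vanishing for `Λ` (`eq_zero_of_bigLam`); in (b) the index is exactly `min T`, where vanishing is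
assumed.
-/

/-!
STATEMENT 13: criteria for a spherical object P_i to be a direct summand of T_r, in
terms of the minimal and maximal nonzero degrees of T.
-/

open CategoryTheory CategoryTheory.Limits CategoryTheory.Pretriangulated

namespace Statement13

universe v u

def typeA (n : ℕ) : SimpleGraph (Fin n) :=
  SimpleGraph.fromRel (fun i j => (i : ℕ) + 1 = (j : ℕ))

def typeD (n : ℕ) : SimpleGraph (Fin n) :=
  SimpleGraph.fromRel
    (fun i j => (1 ≤ (i : ℕ) ∧ (i : ℕ) + 1 = (j : ℕ)) ∨ ((i : ℕ) = 0 ∧ (j : ℕ) = 2))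

def typeE (n : ℕ) : SimpleGraph (Fin n) :=
  SimpleGraph.fromRel
    (fun i j => (1 ≤ (i : ℕ) ∧ (i : ℕ) + 1 = (j : ℕ)) ∨ ((i : ℕ) = 0 ∧ (j : ℕ) = 3))

def IsADE {V : Type*} (G : SimpleGraph V) : Prop :=
  (∃ n : ℕ, 1 ≤ n ∧ Nonempty (G ≃g typeA n)) ∨
  (∃ n : ℕ, 4 ≤ n ∧ Nonempty (G ≃g typeD n)) ∨
  (∃ n : ℕ, (n = 6 ∨ n = 7 ∨ n = 8) ∧ Nonempty (G ≃g typeE n))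

/-- The canonical generator of the "span of the identity" inside `Hom^ω(P, P)`:
for `ω = 0` it is the identity of `P` (transported to `P ⟶ P⟦0⟧`), and for `ω ≠ 0`
it is zero (the identity has degree `0 ≠ ω`). -/
noncomputable def unitClass (D : Type u) [Category.{v} D] [Preadditive D] [HasShift D ℤ]
    (ω : ℤ) (P : D) : P ⟶ P⟦ω⟧ :=
  if h : ω = 0 then (shiftFunctorZero D ℤ).inv.app P ≫ eqToHom (by rw [h]) else 0

/-- A `Γ`-configuration `{P i}` of `ω`-spherical objects in a `k`-linear triangulated
category `D`, normalized with respect to a 2-colouring `col` of `Γ₀` and a decomposition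
`ω = ω₀ + ω₁` so that `Hom^*(P i, P j)` is concentrated in degree `ω_u` when
`col i = u` and `j` is a neighbour of `i`. -/
structure Config (k : Type) [Field k] (V : Type) [Fintype V] [DecidableEq V]
    (G : SimpleGraph V)
    (D : Type u) [Category.{v} D] [Preadditive D] [CategoryTheory.Linear k D]
    [HasZeroObject D] [HasShift D ℤ] [∀ n : ℤ, (shiftFunctor D n).Additive]
    [Pretriangulated D] [HasFiniteBiproducts D]
    (ω ω₀ ω₁ : ℤ) (col : V → ZMod 2) : Type (max u v) where
  P : V → D
  /-- spherical condition (i): `Hom^*(X, P i)` is finite dimensional for every `X` -/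
  finiteness : ∀ (i : V) (X : D),
    FiniteDimensional k (DirectSum ℤ (fun n : ℤ => X ⟶ (P i)⟦n⟧))
  id_ne : ∀ i : V, 𝟙 (P i) ≠ 0
  /-- spherical condition (ii): `Hom^n(P i, P i) = 0` unless `n ∈ {0, ω}` -/
  vanish : ∀ (i : V) (n : ℤ), n ≠ 0 → n ≠ ω → ∀ f : P i ⟶ (P i)⟦n⟧, f = 0
  /-- spherical condition (ii) for `ω = 0`: `End P i ≅ k[t]/(t²)` -/
  endo_zero : ω = 0 → ∀ i : V, ∃ t : P i ⟶ P i, t ≫ t = 0 ∧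
      (∀ f : P i ⟶ P i, ∃ a b : k, f = a • 𝟙 (P i) + b • t) ∧
      (∀ a b : k, a • 𝟙 (P i) + b • t = 0 → a = 0 ∧ b = 0)
  /-- spherical condition (ii) for `ω ≠ 0`: `Hom^0 = k·id` and `Hom^ω` is a line -/
  endo_ne : ω ≠ 0 → ∀ i : V, (∀ f : P i ⟶ P i, ∃ a : k, f = a • 𝟙 (P i)) ∧
      (∃ t : P i ⟶ (P i)⟦ω⟧, t ≠ 0 ∧ ∀ f : P i ⟶ (P i)⟦ω⟧, ∃ a : k, f = a • t)
  /-- spherical condition (iii): nondegeneracy of the composition pairing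
  `Hom^*(P i, X) × Hom^*(X, P i) → Hom^*(P i, P i)/⟨Id⟩ ≅ k` in the first variable -/
  pairing_left : ∀ (i : V) (X : D) (n : ℤ) (f : P i ⟶ X⟦n⟧), f ≠ 0 →
      ∃ g : X ⟶ (P i)⟦ω - n⟧, ¬ ∃ a : k,
        f ≫ (shiftFunctor D n).map g ≫
            (shiftFunctorAdd' D (ω - n) n ω (by ring)).inv.app (P i)
          = a • unitClass D ω (P i)
  /-- spherical condition (iii): nondegeneracy in the second variable -/
  pairing_right : ∀ (i : V) (X : D) (m : ℤ) (g : X ⟶ (P i)⟦m⟧), g ≠ 0 →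
      ∃ f : P i ⟶ X⟦ω - m⟧, ¬ ∃ a : k,
        f ≫ (shiftFunctor D (ω - m)).map g ≫
            (shiftFunctorAdd' D m (ω - m) ω (by ring)).inv.app (P i)
          = a • unitClass D ω (P i)
  /-- the 2-colouring is proper: adjacent vertices have different colours -/
  bipartite : ∀ i j : V, G.Adj i j → col j = col i + 1
  homega : ω₀ + ω₁ = ω
  /-- normalization: for `i ∈ V^u` and `j ∈ N(i)`, `Hom^*(P i, P j)` is concentrated
  in degree `ω_u` -/
  adj_conc : ∀ i j : V, G.Adj i j → ∀ n : ℤ,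
      n ≠ (if col i = 0 then ω₀ else ω₁) → ∀ f : P i ⟶ (P j)⟦n⟧, f = 0
  /-- `Hom^*(P i, P j)` is one-dimensional for adjacent `i`, `j` -/
  adj_one : ∀ i j : V, G.Adj i j →
      ∃ γ : P i ⟶ (P j)⟦if col i = 0 then ω₀ else ω₁⟧, γ ≠ 0 ∧
        ∀ f : P i ⟶ (P j)⟦if col i = 0 then ω₀ else ω₁⟧, ∃ a : k, f = a • γ
  /-- `Hom^*(P i, P j) = 0` for distinct non-adjacent `i`, `j` -/
  nonadj : ∀ i j : V, i ≠ j → ¬ G.Adj i j → ∀ (n : ℤ) (f : P i ⟶ (P j)⟦n⟧), f = 0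

variable {k : Type} [Field k] {V : Type} [Fintype V] [DecidableEq V]
  {G : SimpleGraph V} [DecidableRel G.Adj]
  {D : Type u} [Category.{v} D] [Preadditive D] [CategoryTheory.Linear k D]
  [HasZeroObject D] [HasShift D ℤ] [∀ n : ℤ, (shiftFunctor D n).Additive]
  [Pretriangulated D] [HasFiniteBiproducts D]
  {ω ω₀ ω₁ : ℤ} {col : V → ZMod 2}

/-- `ω_u` for `u ∈ ℤ/2`. -/
def ωsel (ω₀ ω₁ : ℤ) (u : ZMod 2) : ℤ := if u = 0 then ω₀ else ω₁

/-- The object `⊕_{j} P_j^{x_j}` attached to a multiplicity function `x : V → ℕ`. -/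
noncomputable def objOf (C : Config k V G D ω ω₀ ω₁ col) (x : V → ℕ) : D :=
  biproduct (fun p : (Σ j : V, Fin (x j)) => C.P p.1)

/-- A two-term object: an object `X` fitting into a distinguished triangle
`X[−1] --β--> ⊕_{j∈V^u} P_j^{x_j}[−ω_u] --φ--> ⊕_{l∈V^{u+1}} P_l^{y_l} --α--> X`. -/
structure TwoTerm (C : Config k V G D ω ω₀ ω₁ col) : Type (max u v) where
  u : ZMod 2
  x : V → ℕ
  y : V → ℕ
  hx : ∀ j : V, x j ≠ 0 → col j = u
  hy : ∀ j : V, y j ≠ 0 → col j = u + 1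
  X : D
  φ : (objOf C x)⟦-(ωsel ω₀ ω₁ u)⟧ ⟶ objOf C y
  α : objOf C y ⟶ X
  β : X⟦(-1 : ℤ)⟧ ⟶ (objOf C x)⟦-(ωsel ω₀ ω₁ u)⟧
  tri : Triangle.mk φ α ((shiftEquiv D (1 : ℤ)).counitIso.inv.app X ≫
          (shiftFunctor D (1 : ℤ)).map β) ∈ distTriang D

/-- `X` is right-proper: `f ∘ φ_X ≠ 0` for every split epimorphism
`f : ⊕ P_l^{y_l} → P_l`. -/
def RightProper {C : Config k V G D ω ω₀ ω₁ col} (T : TwoTerm C) : Prop :=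
  ∀ l : V, col l = T.u + 1 → ∀ f : objOf C T.y ⟶ C.P l, IsSplitEpi f → T.φ ≫ f ≠ 0

/-- `X` is left-proper: `φ_X ∘ g[−ω_u] ≠ 0` for every split monomorphism
`g : P_l → ⊕ P_j^{x_j}`. -/
def LeftProper {C : Config k V G D ω ω₀ ω₁ col} (T : TwoTerm C) : Prop :=
  ∀ l : V, col l = T.u → ∀ g : C.P l ⟶ objOf C T.x, IsSplitMono g →
    (shiftFunctor D (-(ωsel ω₀ ω₁ T.u))).map g ≫ T.φ ≠ 0

/-- `f : X ⟶ Y[ω]` is a right socle morphism. -/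
def IsRightSocle {C : Config k V G D ω ω₀ ω₁ col} (X Y : TwoTerm C)
    (f : X.X ⟶ (Y.X)⟦ω⟧) : Prop :=
  ∃ f' : X.X ⟶ (objOf C Y.y)⟦ω⟧,
    f = f' ≫ (shiftFunctor D ω).map Y.α ∧
    ∀ l : V, col l = Y.u + 1 → ∀ g : objOf C Y.y ⟶ C.P l, IsSplitEpi g →
      ¬ IsSplitEpi (X.α ≫ f' ≫ (shiftFunctor D ω).map g)


/-- The object `Λ = ⊕_{i ∈ Γ₀} P i`. -/
noncomputable def bigLam (C : Config k V G D ω ω₀ ω₁ col) : D :=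
  biproduct (fun i : V => C.P i)

/-- A nonzero morphism `f ∈ Hom^{r+ω}(P j, T)` is long if `Hom^*(P l, f) = 0` for
every `l ≠ j`. -/
def IsLong (C : Config k V G D ω ω₀ ω₁ col) (j : V) (T : D) (r : ℤ)
    (f : C.P j ⟶ T⟦r + ω⟧) : Prop :=
  f ≠ 0 ∧ ∀ l : V, l ≠ j → ∀ (n : ℤ) (g : C.P l ⟶ (C.P j)⟦n⟧),
    g ≫ (shiftFunctor D n).map f = 0

/-- `P j` is a direct summand of `T_r`: there exists a long morphism
`P j ⟶ T[r + ω]`. -/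
def IsSummand (C : Config k V G D ω ω₀ ω₁ col) (j : V) (T : D) (r : ℤ) : Prop :=
  ∃ f : C.P j ⟶ T⟦r + ω⟧, IsLong C j T r f

/-- Vanishing of `Hom^s(Λ, T)` passes to the summands `P l` of `Λ`. -/
lemma eq_zero_of_bigLam (C : Config k V G D ω ω₀ ω₁ col) {T : D} {s : ℤ}
    (h : ∀ f : bigLam C ⟶ T⟦s⟧, f = 0) (l : V) (f : C.P l ⟶ T⟦s⟧) : f = 0 := by
  have h0 : biproduct.π (fun i : V => C.P i) l ≫ f = 0 := h _
  rw [← biproduct.ι_π_self_assoc (fun i : V => C.P i) l f, h0, comp_zero]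

/-- A nonzero `f : P i ⟶ T⟦r + ω⟧` is long once the only degree in which a neighbour `P l` can
map to `P i` leads to a zero group `Hom(P l, T)`. -/
lemma isLong_of_forall_adj (C : Config k V G D ω ω₀ ω₁ col) {T : D} {i : V} {r s : ℤ}
    (hs : r + ω + ωsel ω₀ ω₁ (col i + 1) = s)
    (h : ∀ l : V, G.Adj i l → ∀ f : C.P l ⟶ T⟦s⟧, f = 0)
    (f : C.P i ⟶ T⟦r + ω⟧) (hf : f ≠ 0) : IsLong C i T r f := by
  refine ⟨hf, fun l hl n g => ?_⟩
  by_cases hadj : G.Adj l i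
  · by_cases hn : n = ωsel ω₀ ω₁ (col l)
    · rw [C.bipartite i l hadj.symm] at hn
      subst hn
      have h0 := h l hadj.symm
        ((g ≫ (shiftFunctor D (ωsel ω₀ ω₁ (col i + 1))).map f) ≫
          (shiftFunctorAdd' D (r + ω) (ωsel ω₀ ω₁ (col i + 1)) s hs).inv.app T)
      exact zero_of_comp_mono _ h0
    · rw [C.adj_conc l i hadj n hn g, zero_comp]
  · rw [C.nonadj l i hl hadj n g, zero_comp]

theorem statement13 (hADE : IsADE G) (C : Config k V G D ω ω₀ ω₁ col)
    (T : D) (i : V)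
    (m M : ℤ)
    -- `m = min(T)`:
    (hm₁ : ∃ f : bigLam C ⟶ T⟦m + ω⟧, f ≠ 0)
    (hm₂ : ∀ r : ℤ, r < m → ∀ f : bigLam C ⟶ T⟦r + ω⟧, f = 0)
    -- `M = max(T)`:
    (hM₁ : ∃ f : bigLam C ⟶ T⟦M + ω⟧, f ≠ 0)
    (hM₂ : ∀ r : ℤ, M < r → ∀ f : bigLam C ⟶ T⟦r + ω⟧, f = 0) :
    -- (a)
    (∀ r : ℤ, r ≤ m - ωsel ω₀ ω₁ (col i + 1) - 1 →
      (∃ f : C.P i ⟶ T⟦r + ω⟧, f ≠ 0) → IsSummand C i T r) ∧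
    -- (b)
    ((∀ j : V, G.Adj i j → ∀ f : C.P j ⟶ T⟦m + ω⟧, f = 0) →
      (∃ f : C.P i ⟶ T⟦m + ω - ωsel ω₀ ω₁ (col i + 1)⟧, f ≠ 0) →
      IsSummand C i T (m - ωsel ω₀ ω₁ (col i + 1))) ∧
    -- (c)
    (∀ r : ℤ, M - ωsel ω₀ ω₁ (col i + 1) + 1 ≤ r →
      (∃ f : C.P i ⟶ T⟦r + ω⟧, f ≠ 0) → IsSummand C i T r) := by
  refine ⟨fun r hr ⟨f, hf⟩ => ⟨f, ?_⟩, fun h hex => ?_, fun r hr ⟨f, hf⟩ => ⟨f, ?_⟩⟩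
  · exact isLong_of_forall_adj C (s := r + ωsel ω₀ ω₁ (col i + 1) + ω) (by ring)
      (fun l _ => eq_zero_of_bigLam C (hm₂ _ (by lia)) l) f hf
  · -- The degrees `m + ω - ω_{u+1}` and `(m - ω_{u+1}) + ω` agree only propositionally.
    rw [show m + ω - ωsel ω₀ ω₁ (col i + 1) = m - ωsel ω₀ ω₁ (col i + 1) + ω by ring] at hex
    obtain ⟨f, hf⟩ := hex
    exact ⟨f, isLong_of_forall_adj C (s := m + ω) (by ring) h f hf⟩
  · exact isLong_of_forall_adj C (s := r + ωsel ω₀ ω₁ (col i + 1) + ω) (by ring)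
      (fun l _ => eq_zero_of_bigLam C (hM₂ _ (by lia)) l) f hf

end Statement13
end
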